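/- Let 17 ≤ N ≤ 30. Then the pull-in voltage of (P)_λ on the unit ball satisfies λ* ≤ H_N/2 = N²(N−4)²/32. -/

import Mathlib

open MeasureTheory Metric Set Filter

/-- The Laplacian of `u : ℝ^N → ℝ`, as the sum of pure second partial derivatives. -/
noncomputable def lap {N : ℕ} (u : EuclideanSpace ℝ (Fin N) → ℝ) (x : EuclideanSpace ℝ (Fin N)) : ℝ :=
  ∑ i : Fin N, fderiv ℝ (fun y => fderiv ℝ u y (EuclideanSpace.single i 1)) x
    (EuclideanSpace.single i 1)

/-- The biharmonic operator `Δ²`. -/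
noncomputable def biharm {N : ℕ} (u : EuclideanSpace ℝ (Fin N) → ℝ)
    (x : EuclideanSpace ℝ (Fin N)) : ℝ :=
  lap (lap u) x

/-- A classical solution of `(P)_λ` on the unit ball `B ⊆ ℝ^N`:
`u ∈ C⁴(B̄)`, `0 < u < 1` in `B`, `Δ²u = λ (1-u)⁻²` in `B`, and `u = 0`, `∂_ν u = 0` on `∂B`. -/
structure IsClassicalSolution (N : ℕ) (lam : ℝ) (u : EuclideanSpace ℝ (Fin N) → ℝ) : Prop where
  contDiffOn : ContDiffOn ℝ 4 u (closedBall (0 : EuclideanSpace ℝ (Fin N)) 1)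
  pos : ∀ x ∈ ball (0 : EuclideanSpace ℝ (Fin N)) 1, 0 < u x
  lt_one : ∀ x ∈ ball (0 : EuclideanSpace ℝ (Fin N)) 1, u x < 1
  eqn : ∀ x ∈ ball (0 : EuclideanSpace ℝ (Fin N)) 1, biharm u x = lam / (1 - u x) ^ 2
  bdry : ∀ x : EuclideanSpace ℝ (Fin N), ‖x‖ = 1 → u x = 0
  bdry_deriv : ∀ x : EuclideanSpace ℝ (Fin N), ‖x‖ = 1 →
    fderivWithin ℝ u (closedBall (0 : EuclideanSpace ℝ (Fin N)) 1) x x = 0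

/-- The set of voltages `λ > 0` for which `(P)_λ` admits a classical solution;
the pull-in voltage `λ*` is its supremum. -/
def solSet (N : ℕ) : Set ℝ := {lam | 0 < lam ∧ ∃ u, IsClassicalSolution N lam u}

/-- `λ̄_N = (8/9)(N - 2/3)(N - 8/3)`. -/
noncomputable def lamBar (N : ℕ) : ℝ := (8 / 9) * ((N : ℝ) - 2 / 3) * ((N : ℝ) - 8 / 3)

/-!
Let `L = N² (N - 4)² / 32`. The convex function `v ↦ (1 - v)⁻²` lies above its tangent lines, so a
solution `u` with voltage `λ` satisfies `Δ² u ≥ λ (3 s² - 2 s³) + 2 λ s³ u` for every function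
`s ≥ 0`. Suppose that `φ ≥ 0` is clamped on the unit sphere, that `Δ² φ ≤ 2 L s³ φ`, and that
`∫ φ (3 s² - 2 s³) > 0`. If `λ > L`, testing the inequality for `Δ² u` against `φ` contradicts
Green's identity `∫ φ Δ² u = ∫ u Δ² φ`. For `N ≥ 17` such a pair is
`φ = 4 |x| ^ (6 - N) - (N - 4) |x| ^ (-2) + (N - 8) |x| ^ 2` and `s = (8 / 11) |x| ^ (-4 / 3)`.
Green's identity holds for this singular `φ` because it holds for the clamped powers of
`|x| ^ 2 + ε`, and dominated convergence applies as `ε → 0`.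
-/

section Divergence

variable {E : Type*} [NormedAddCommGroup E] [NormedSpace ℝ E]

theorem exists_mem_frontier_dist_le {s : Set E} {x y : E} (hx : x ∈ s) (hy : y ∉ s) :
    ∃ z ∈ frontier s, dist x z ≤ dist x y := by
  by_contra! h
  have hsub : segment ℝ x y ⊆ interior s ∪ interior sᶜ := by
    rw [← compl_frontier_eq_union_interior]
    intro z hz hzs
    linarith [h z hzs, dist_add_dist_of_mem_segment hz, dist_nonneg (x := z) (y := y)]
  have hx' : x ∈ interior s := (hsub (left_mem_segment ℝ x y)).resolve_right
    fun h' => interior_subset h' hx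
  have hy' : y ∈ interior sᶜ := (hsub (right_mem_segment ℝ x y)).resolve_left
    fun h' => hy (interior_subset h')
  obtain ⟨z, -, hz, hz'⟩ := (convex_segment x y).isPreconnected _ _ isOpen_interior
    isOpen_interior hsub ⟨x, left_mem_segment ℝ x y, hx'⟩ ⟨y, right_mem_segment ℝ x y, hy'⟩
  exact interior_subset hz' (interior_subset hz)

theorem lipschitzWith_indicator_of_frontier {F : Type*} [NormedAddCommGroup F] {s : Set E}
    {f : E → F} {C : NNReal} (hs : IsClosed s) (hf : LipschitzOnWith C f s)
    (h0 : ∀ x ∈ frontier s, f x = 0) : LipschitzWith C (s.indicator f) := by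
  have hcross : ∀ x ∈ s, ∀ y ∉ s, dist (f x) 0 ≤ C * dist x y := by
    intro x hx y hy
    obtain ⟨z, hz, hxz⟩ := exists_mem_frontier_dist_le hx hy
    calc dist (f x) 0 = dist (f x) (f z) := by rw [h0 z hz]
      _ ≤ C * dist x z := hf.dist_le_mul x hx z (hs.frontier_subset hz)
      _ ≤ C * dist x y := by gcongr
  refine LipschitzWith.of_dist_le_mul fun x y => ?_
  by_cases hx : x ∈ s <;> by_cases hy : y ∈ s <;> simp only [hx, hy, indicator_of_mem,
    indicator_of_notMem, not_false_eq_true]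
  · exact hf.dist_le_mul x hx y hy
  · exact hcross x hx y hy
  · rw [dist_comm, dist_comm x]
    exact hcross y hy x hx
  · rw [dist_self]
    positivity

theorem lineDeriv_indicator_of_notMem_frontier {s : Set E} {f : E → ℝ} {x : E}
    (hf : DifferentiableOn ℝ f s) (hx : x ∉ frontier s) (v : E) :
    lineDeriv ℝ (s.indicator f) x v =
      (interior s).indicator (fun y => fderivWithin ℝ f s y v) x := by
  rw [← mem_compl_iff, compl_frontier_eq_union_interior] at hx
  rcases hx with hx | hx
  · have hs : s ∈ nhds x := mem_interior_iff_mem_nhds.1 hx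
    have hfs : s.indicator f =ᶠ[nhds x] f := mem_of_superset hs fun y hy => indicator_of_mem hy f
    rw [hfs.lineDeriv_eq, indicator_of_mem hx, fderivWithin_of_mem_nhds hs,
      (hf.differentiableAt hs).lineDeriv_eq_fderiv]
  · have hfs : s.indicator f =ᶠ[nhds x] fun _ => 0 :=
      mem_of_superset (mem_interior_iff_mem_nhds.1 hx) fun y hy => indicator_of_notMem hy f
    rw [hfs.lineDeriv_eq, indicator_of_notMem fun h => interior_subset hx (interior_subset h)]
    simp only [lineDeriv, deriv_const]

variable [FiniteDimensional ℝ E] [MeasurableSpace E] [BorelSpace E] (μ : Measure E)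
  [μ.IsAddHaarMeasure] {K : Set E}

theorem integral_lineDeriv_eq_zero_of_lipschitzWith {f : E → ℝ} {C : NNReal}
    (hf : LipschitzWith C f) (hs : HasCompactSupport f) (v : E) :
    ∫ x, lineDeriv ℝ f x v ∂μ = 0 := by
  simpa [lineDeriv] using
    (LipschitzWith.integral_lineDeriv_mul_eq (μ := μ) (LipschitzWith.const 1) hf hs (-v)).symm

theorem setIntegral_fderivWithin_eq_zero (hK : IsCompact K) (hKc : Convex ℝ K)
    (hKi : (interior K).Nonempty) {f : E → ℝ} (hf : ContDiffOn ℝ 1 f K)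
    (h0 : ∀ x ∈ frontier K, f x = 0) (v : E) :
    ∫ x in interior K, fderivWithin ℝ f K x v ∂μ = 0 := by
  obtain ⟨C, hC⟩ := hK.exists_bound_of_continuousOn
    (hf.continuousOn_fderivWithin (uniqueDiffOn_convex hKc hKi) le_rfl)
  have hdiff : DifferentiableOn ℝ f K := hf.differentiableOn one_ne_zero
  have hlip : LipschitzOnWith C.toNNReal f K :=
    hKc.lipschitzOnWith_of_nnnorm_fderivWithin_le hdiff fun x hx =>
      (hC x hx).trans (Real.le_coe_toNNReal C)
  have hae : ∀ᵐ x ∂μ, lineDeriv ℝ (K.indicator f) x v =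
      (interior K).indicator (fun y => fderivWithin ℝ f K y v) x := by
    filter_upwards [measure_eq_zero_iff_ae_notMem.1 (hKc.addHaar_frontier μ)] with x hx
    exact lineDeriv_indicator_of_notMem_frontier hdiff hx v
  rw [← integral_indicator isOpen_interior.measurableSet, ← integral_congr_ae hae]
  exact integral_lineDeriv_eq_zero_of_lipschitzWith μ
    (lipschitzWith_indicator_of_frontier hK.isClosed hlip h0)
    (HasCompactSupport.intro hK fun x hx => indicator_of_notMem hx f) v

end Divergence

section Green

variable {N : ℕ} {K : Set (EuclideanSpace ℝ (Fin N))} {f g : EuclideanSpace ℝ (Fin N) → ℝ}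
  {x : EuclideanSpace ℝ (Fin N)} {m n : WithTop ℕ∞}

/-- The `i`-th partial derivative of `f` within `K`. Unlike `fderiv`, it is the one-sided
derivative at frontier points, so it inherits the regularity of `f` up to the frontier. -/
noncomputable def partialDerivWithin (K : Set (EuclideanSpace ℝ (Fin N))) (i : Fin N)
    (f : EuclideanSpace ℝ (Fin N) → ℝ) (x : EuclideanSpace ℝ (Fin N)) : ℝ :=
  fderivWithin ℝ f K x (EuclideanSpace.single i 1)

/-- The Laplacian of `f` within `K`: it coincides with `lap` in the interior of `K` and is
continuous up to the frontier when `f` is `C²` on `K`. -/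
noncomputable def lapWithin (K : Set (EuclideanSpace ℝ (Fin N)))
    (f : EuclideanSpace ℝ (Fin N) → ℝ) (x : EuclideanSpace ℝ (Fin N)) : ℝ :=
  ∑ i, partialDerivWithin K i (partialDerivWithin K i f) x

theorem contDiffOn_partialDerivWithin (hK : UniqueDiffOn ℝ K) (hf : ContDiffOn ℝ n f K)
    (hmn : m + 1 ≤ n) (i : Fin N) : ContDiffOn ℝ m (partialDerivWithin K i f) K :=
  (hf.fderivWithin hK hmn).clm_apply contDiffOn_const

theorem contDiffOn_lapWithin (hK : UniqueDiffOn ℝ K) (hf : ContDiffOn ℝ n f K)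
    (hmn : m + 1 + 1 ≤ n) : ContDiffOn ℝ m (lapWithin K f) K :=
  ContDiffOn.sum fun i _ => contDiffOn_partialDerivWithin hK
    (contDiffOn_partialDerivWithin hK hf hmn i) le_rfl i

theorem partialDerivWithin_mul (hK : UniqueDiffOn ℝ K) (hf : DifferentiableOn ℝ f K)
    (hg : DifferentiableOn ℝ g K) (hx : x ∈ K) (i : Fin N) :
    partialDerivWithin K i (fun y => f y * g y) x =
      f x * partialDerivWithin K i g x + g x * partialDerivWithin K i f x := by
  simp [partialDerivWithin, fderivWithin_fun_mul (hK x hx) (hf x hx) (hg x hx)]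

theorem partialDerivWithin_sub (hK : UniqueDiffOn ℝ K) (hf : DifferentiableOn ℝ f K)
    (hg : DifferentiableOn ℝ g K) (hx : x ∈ K) (i : Fin N) :
    partialDerivWithin K i (fun y => f y - g y) x =
      partialDerivWithin K i f x - partialDerivWithin K i g x := by
  simp [partialDerivWithin, fderivWithin_fun_sub (hK x hx) (hf x hx) (hg x hx)]

theorem partialDerivWithin_of_mem_interior (hx : x ∈ interior K) (i : Fin N) :
    partialDerivWithin K i f x = fderiv ℝ f x (EuclideanSpace.single i 1) := by
  rw [partialDerivWithin, fderivWithin_of_mem_nhds (mem_interior_iff_mem_nhds.1 hx)]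

theorem lap_congr (h : f =ᶠ[nhds x] g) : lap f x = lap g x := by
  refine Finset.sum_congr rfl fun i _ => ?_
  have hi : (fun y => fderiv ℝ f y (EuclideanSpace.single i 1)) =ᶠ[nhds x]
      fun y => fderiv ℝ g y (EuclideanSpace.single i 1) :=
    h.fderiv.fun_comp fun L => L (EuclideanSpace.single i 1)
  rw [hi.fderiv_eq]

theorem lapWithin_of_mem_interior (hx : x ∈ interior K) : lapWithin K f x = lap f x := by
  refine Finset.sum_congr rfl fun i _ => ?_
  have hi : partialDerivWithin K i f =ᶠ[nhds x]
      fun y => fderiv ℝ f y (EuclideanSpace.single i 1) :=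
    mem_of_superset (isOpen_interior.mem_nhds hx) fun y hy =>
      partialDerivWithin_of_mem_interior hy i
  rw [partialDerivWithin_of_mem_interior hx, hi.fderiv_eq]

theorem biharm_of_mem_interior (hx : x ∈ interior K) :
    biharm f x = lapWithin K (lapWithin K f) x := by
  rw [lapWithin_of_mem_interior hx, biharm]
  exact lap_congr (mem_of_superset (isOpen_interior.mem_nhds hx) fun y hy =>
    (lapWithin_of_mem_interior hy).symm)

theorem integrableOn_interior_of_continuousOn (hK : IsCompact K) (hf : ContinuousOn f K) :
    IntegrableOn f (interior K) :=
  (hf.integrableOn_compact hK).mono_set interior_subset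

theorem mul_lapWithin_sub_mul_lapWithin (hK : UniqueDiffOn ℝ K) (hf : ContDiffOn ℝ 2 f K)
    (hg : ContDiffOn ℝ 2 g K) (hx : x ∈ K) :
    f x * lapWithin K g x - g x * lapWithin K f x =
      ∑ i, partialDerivWithin K i
        (fun y => f y * partialDerivWithin K i g y - g y * partialDerivWithin K i f y) x := by
  have hf1 : DifferentiableOn ℝ f K := hf.differentiableOn two_ne_zero
  have hg1 : DifferentiableOn ℝ g K := hg.differentiableOn two_ne_zero
  have hf2 i : DifferentiableOn ℝ (partialDerivWithin K i f) K :=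
    (contDiffOn_partialDerivWithin hK hf one_add_one_eq_two.le i).differentiableOn one_ne_zero
  have hg2 i : DifferentiableOn ℝ (partialDerivWithin K i g) K :=
    (contDiffOn_partialDerivWithin hK hg one_add_one_eq_two.le i).differentiableOn one_ne_zero
  simp only [lapWithin, Finset.mul_sum, ← Finset.sum_sub_distrib]
  refine Finset.sum_congr rfl fun i _ => ?_
  rw [partialDerivWithin_sub hK (hf1.fun_mul (hg2 i)) (hg1.fun_mul (hf2 i)) hx,
    partialDerivWithin_mul hK hf1 (hg2 i) hx, partialDerivWithin_mul hK hg1 (hf2 i) hx]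
  ring

theorem integral_mul_lapWithin_sub_eq_zero (hK : IsCompact K) (hKc : Convex ℝ K)
    (hKi : (interior K).Nonempty) (hf : ContDiffOn ℝ 2 f K) (hf0 : ∀ x ∈ frontier K, f x = 0)
    (hf1 : ∀ x ∈ frontier K, fderivWithin ℝ f K x = 0) (hg : ContDiffOn ℝ 2 g K) :
    ∫ x in interior K, (f x * lapWithin K g x - g x * lapWithin K f x) = 0 := by
  have hu : UniqueDiffOn ℝ K := uniqueDiffOn_convex hKc hKi
  have hflux i : ContDiffOn ℝ 1
      (fun y => f y * partialDerivWithin K i g y - g y * partialDerivWithin K i f y) K :=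
    ((hf.of_le one_le_two).mul
      (contDiffOn_partialDerivWithin hu hg one_add_one_eq_two.le i)).sub
    ((hg.of_le one_le_two).mul (contDiffOn_partialDerivWithin hu hf one_add_one_eq_two.le i))
  rw [setIntegral_congr_fun isOpen_interior.measurableSet fun x hx =>
      mul_lapWithin_sub_mul_lapWithin hu hf hg (interior_subset hx),
    integral_finsetSum _ fun i _ => integrableOn_interior_of_continuousOn hK
      (contDiffOn_partialDerivWithin (m := 0) hu (hflux i) (by simp) i).continuousOn]
  refine Finset.sum_eq_zero fun i _ => setIntegral_fderivWithin_eq_zero volume hK hKc hKi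
    (hflux i) (fun x hx => ?_) _
  simp [partialDerivWithin, hf0 x hx, hf1 x hx]

theorem continuousOn_lapWithin_lapWithin (hK : UniqueDiffOn ℝ K) (hf : ContDiffOn ℝ 4 f K) :
    ContinuousOn (lapWithin K (lapWithin K f)) K :=
  (contDiffOn_lapWithin (m := 0) hK (contDiffOn_lapWithin (m := 2) hK hf
    (by norm_num)) (by norm_num)).continuousOn

theorem exists_norm_biharm_le (hK : IsCompact K) (hKu : UniqueDiffOn ℝ K)
    (hf : ContDiffOn ℝ 4 f K) : ∃ C, ∀ x ∈ interior K, ‖biharm f x‖ ≤ C := by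
  obtain ⟨C, hC⟩ := hK.exists_bound_of_continuousOn (continuousOn_lapWithin_lapWithin hKu hf)
  refine ⟨C, fun x hx => ?_⟩
  rw [biharm_of_mem_interior hx]
  exact hC x (interior_subset hx)

theorem continuousOn_biharm_interior (hK : UniqueDiffOn ℝ K) (hf : ContDiffOn ℝ 4 f K) :
    ContinuousOn (biharm f) (interior K) :=
  ((continuousOn_lapWithin_lapWithin hK hf).mono interior_subset).congr fun _ hx =>
    biharm_of_mem_interior hx

/-- A function in `C⁴(K)` satisfying the clamped (homogeneous Dirichlet) boundary conditions of
the biharmonic operator. -/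
structure IsClamped (K : Set (EuclideanSpace ℝ (Fin N))) (f : EuclideanSpace ℝ (Fin N) → ℝ) :
    Prop where
  contDiffOn : ContDiffOn ℝ 4 f K
  eq_zero : ∀ x ∈ frontier K, f x = 0
  fderivWithin_eq_zero : ∀ x ∈ frontier K, fderivWithin ℝ f K x = 0

theorem IsClamped.integral_mul_biharm_sub_eq_zero (hK : IsCompact K) (hKc : Convex ℝ K)
    (hKi : (interior K).Nonempty) (hf : IsClamped K f) (hg : IsClamped K g) :
    ∫ x in interior K, (f x * biharm g x - g x * biharm f x) = 0 := by
  have hu : UniqueDiffOn ℝ K := uniqueDiffOn_convex hKc hKi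
  have hΔ {h} (hh : IsClamped K h) : ContDiffOn ℝ 2 (lapWithin K h) K :=
    contDiffOn_lapWithin hu hh.contDiffOn (by norm_num)
  have hgreen {h k} (hh : IsClamped K h) (hk : IsClamped K k) : ∫ x in interior K,
      (h x * lapWithin K (lapWithin K k) x - lapWithin K k x * lapWithin K h x) = 0 :=
    integral_mul_lapWithin_sub_eq_zero hK hKc hKi (hh.contDiffOn.of_le (by norm_num)) hh.eq_zero
      hh.fderivWithin_eq_zero (hΔ hk)
  have hint {h k} (hh : IsClamped K h) (hk : IsClamped K k) : IntegrableOn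
      (fun x => h x * lapWithin K (lapWithin K k) x - lapWithin K k x * lapWithin K h x)
      (interior K) :=
    integrableOn_interior_of_continuousOn hK ((hh.contDiffOn.continuousOn.mul
      (continuousOn_lapWithin_lapWithin hu hk.contDiffOn)).sub
      ((hΔ hk).continuousOn.mul (hΔ hh).continuousOn))
  calc ∫ x in interior K, (f x * biharm g x - g x * biharm f x)
    _ = ∫ x in interior K,
        ((f x * lapWithin K (lapWithin K g) x - lapWithin K g x * lapWithin K f x) -
          (g x * lapWithin K (lapWithin K f) x - lapWithin K f x * lapWithin K g x)) := by
      refine setIntegral_congr_fun isOpen_interior.measurableSet fun x hx => ?_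
      simp only [biharm_of_mem_interior hx]
      ring
    _ = 0 := by
      rw [integral_sub (hint hf hg) (hint hg hf), hgreen hf hg, hgreen hg hf, sub_zero]

end Green

section UnitSphere

variable {E F : Type*} [NormedAddCommGroup E] [InnerProductSpace ℝ E] [NormedAddCommGroup F]
  [NormedSpace ℝ F] {f : E → F} {f' : E →L[ℝ] F} {x : E}

theorem norm_cos_smul_add_sin_smul {v : E} (hx : ‖x‖ = 1) (hv : ‖v‖ = 1) (hxv : inner ℝ x v = 0)
    (θ : ℝ) : ‖Real.cos θ • x + Real.sin θ • v‖ = 1 := by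
  rw [← sq_eq_sq₀ (norm_nonneg _) zero_le_one, norm_add_sq_real, norm_smul, norm_smul, hx, hv,
    real_inner_smul_left, real_inner_smul_right, hxv]
  simp

theorem apply_eq_zero_of_unit_tangent {v : E} (hf : HasFDerivWithinAt f f' (sphere 0 1) x)
    (h0 : ∀ y ∈ sphere (0 : E) 1, f y = 0) (hx : ‖x‖ = 1) (hv : ‖v‖ = 1)
    (hxv : inner ℝ x v = 0) : f' v = 0 := by
  let γ : ℝ → E := fun θ => Real.cos θ • x + Real.sin θ • v
  have hγ_sphere θ : γ θ ∈ sphere (0 : E) 1 := by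
    simpa using norm_cos_smul_add_sin_smul hx hv hxv θ
  have hγ_zero : γ 0 = x := by simp [γ]
  have hγ : HasDerivAt γ v 0 := by
    simpa using
      ((Real.hasDerivAt_cos 0).smul_const x).fun_add ((Real.hasDerivAt_sin 0).smul_const v)
  have hfγ : HasDerivWithinAt (f ∘ γ) (f' v) univ 0 :=
    HasFDerivWithinAt.comp_hasDerivWithinAt 0 (by rwa [hγ_zero]) hγ.hasDerivWithinAt
      fun θ _ => hγ_sphere θ
  have hfγ_zero : f ∘ γ = fun _ => 0 := funext fun θ => h0 _ (hγ_sphere θ)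
  rw [hfγ_zero] at hfγ
  exact (hasDerivWithinAt_univ.1 hfγ).unique (hasDerivAt_const 0 0)

theorem apply_eq_zero_of_tangent {v : E} (hf : HasFDerivWithinAt f f' (sphere 0 1) x)
    (h0 : ∀ y ∈ sphere (0 : E) 1, f y = 0) (hx : ‖x‖ = 1) (hxv : inner ℝ x v = 0) :
    f' v = 0 := by
  rcases eq_or_ne v 0 with rfl | hv
  · exact map_zero f'
  have hunit : f' (‖v‖⁻¹ • v) = 0 :=
    apply_eq_zero_of_unit_tangent hf h0 hx (norm_smul_inv_norm (𝕜 := ℝ) hv)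
      (by rw [real_inner_smul_right, hxv, mul_zero])
  simpa [hv] using hunit

theorem eq_zero_of_eq_zero_on_sphere_of_radial (hf : HasFDerivWithinAt f f' (sphere 0 1) x)
    (h0 : ∀ y ∈ sphere (0 : E) 1, f y = 0) (hx : ‖x‖ = 1) (hfx : f' x = 0) : f' = 0 := by
  ext v
  have htangent : inner ℝ x (v - inner ℝ x v • x) = 0 := by
    rw [inner_sub_right, real_inner_smul_right, real_inner_self_eq_norm_sq, hx]
    ring
  simpa [hfx] using apply_eq_zero_of_tangent hf h0 hx htangent

end UnitSphere

theorem IsClassicalSolution.isClamped {N : ℕ} {lam : ℝ} {u : EuclideanSpace ℝ (Fin N) → ℝ}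
    (hu : IsClassicalSolution N lam u) : IsClamped (closedBall 0 1) u := by
  refine ⟨hu.contDiffOn, ?_, ?_⟩ <;> rw [frontier_closedBall 0 one_ne_zero]
  · exact fun x hx => hu.bdry x (mem_sphere_zero_iff_norm.1 hx)
  · intro x hx
    have hx1 : ‖x‖ = 1 := mem_sphere_zero_iff_norm.1 hx
    have hdiff : HasFDerivWithinAt u (fderivWithin ℝ u (closedBall 0 1) x) (closedBall 0 1) x :=
      (hu.contDiffOn.differentiableOn four_ne_zero x
        (sphere_subset_closedBall hx)).hasFDerivWithinAt
    exact eq_zero_of_eq_zero_on_sphere_of_radial (hdiff.mono sphere_subset_closedBall)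
      (fun y hy => hu.bdry y (mem_sphere_zero_iff_norm.1 hy)) hx1 (hu.bdry_deriv x hx1)

section Radial

theorem hasFDerivAt_comp_norm_sq {E : Type*} [NormedAddCommGroup E] [InnerProductSpace ℝ E]
    {F : ℝ → ℝ} {F' : ℝ} {x : E} (hF : HasDerivAt F F' (‖x‖ ^ 2)) :
    HasFDerivAt (fun y => F (‖y‖ ^ 2)) ((2 * F') • innerSL ℝ x) x := by
  refine (hF.comp_hasFDerivAt x (hasStrictFDerivAt_norm_sq x).hasFDerivAt).congr_fderiv ?_
  rw [← Nat.cast_smul_eq_nsmul ℝ 2, smul_smul, mul_comm, Nat.cast_ofNat]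

variable {N : ℕ} {F G : ℝ → ℝ} {F' G' : ℝ} {x : EuclideanSpace ℝ (Fin N)}

theorem fderiv_comp_norm_sq_single (hF : HasDerivAt F F' (‖x‖ ^ 2)) (i : Fin N) :
    fderiv ℝ (fun y => F (‖y‖ ^ 2)) x (EuclideanSpace.single i 1) = 2 * F' * x i := by
  simp [(hasFDerivAt_comp_norm_sq hF).fderiv, EuclideanSpace.inner_single_right]

theorem lap_comp_norm_sq (hF : ∀ᶠ t in nhds (‖x‖ ^ 2), HasDerivAt F (G t) t)
    (hG : HasDerivAt G G' (‖x‖ ^ 2)) :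
    lap (fun y => F (‖y‖ ^ 2)) x = 4 * ‖x‖ ^ 2 * G' + 2 * N * G (‖x‖ ^ 2) := by
  have hfirst i : (fun y : EuclideanSpace ℝ (Fin N) =>
      fderiv ℝ (fun z => F (‖z‖ ^ 2)) y (EuclideanSpace.single i 1)) =ᶠ[nhds x]
      fun y => 2 * G (‖y‖ ^ 2) * y i :=
    ((continuous_norm.pow 2).tendsto x).eventually hF |>.mono fun y hy =>
      fderiv_comp_norm_sq_single hy i
  have hsecond i : HasFDerivAt (fun y : EuclideanSpace ℝ (Fin N) => 2 * G (‖y‖ ^ 2) * y i) _ x :=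
    ((hasFDerivAt_comp_norm_sq hG).const_mul 2).mul
      (EuclideanSpace.proj i : EuclideanSpace ℝ (Fin N) →L[ℝ] ℝ).hasFDerivAt
  have hterm i : fderiv ℝ (fun y : EuclideanSpace ℝ (Fin N) =>
      fderiv ℝ (fun z => F (‖z‖ ^ 2)) y (EuclideanSpace.single i 1)) x
      (EuclideanSpace.single i 1) = 4 * G' * x i ^ 2 + 2 * G (‖x‖ ^ 2) := by
    rw [(hfirst i).fderiv_eq, (hsecond i).fderiv]
    simp [EuclideanSpace.inner_single_right]
    ring
  calc lap (fun y => F (‖y‖ ^ 2)) x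
    _ = ∑ i, (4 * G' * x i ^ 2 + 2 * G (‖x‖ ^ 2)) := Finset.sum_congr rfl fun i _ => hterm i
    _ = 4 * ‖x‖ ^ 2 * G' + 2 * N * G (‖x‖ ^ 2) := by
      rw [Finset.sum_add_distrib, ← Finset.mul_sum, ← EuclideanSpace.real_norm_sq_eq,
        Finset.sum_const, Finset.card_univ, Fintype.card_fin, nsmul_eq_mul]
      ring

end Radial

section ClampedPower

variable {N : ℕ} {q ε t : ℝ}

/-- The Taylor remainder at `t = 1`, to first order, of the shifted power `(t + ε) ^ q`. Subtracting
the Taylor polynomial clamps the radial function `‖x‖ ^ 2 ↦ (‖x‖ ^ 2 + ε) ^ q` on the unit sphere,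
and `ε > 0` smooths it at the origin. -/
noncomputable def clampedPow (q ε t : ℝ) : ℝ :=
  (t + ε) ^ q - (1 + ε) ^ q - q * (1 + ε) ^ (q - 1) * (t - 1)

/-- The factor `A` in `Δ (‖x‖ ^ 2) ^ q = A (‖x‖ ^ 2) ^ (q - 1)` on `ℝ ^ N`. -/
def lapPowCoeff (N : ℕ) (q : ℝ) : ℝ := 2 * q * (2 * q - 2 + N)

/-- The bilaplacian on `ℝ ^ N` of `clampedPow q ε (‖x‖ ^ 2)`, as a function of `t = ‖x‖ ^ 2`. -/
noncomputable def bilapClampedPow (N : ℕ) (q ε t : ℝ) : ℝ :=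
  lapPowCoeff N q * lapPowCoeff N (q - 1) * (t + ε) ^ (q - 2) -
    ε * (4 * (q - 1) * (q - 2) * lapPowCoeff N q + 4 * q * (q - 1) * lapPowCoeff N (q - 2)) *
      (t + ε) ^ (q - 3) +
    ε ^ 2 * (16 * q * (q - 1) * (q - 2) * (q - 3)) * (t + ε) ^ (q - 4)

theorem hasDerivAt_add_rpow (h : 0 < t + ε) :
    HasDerivAt (fun s => (s + ε) ^ q) (q * (t + ε) ^ (q - 1)) t := by
  simpa using ((hasDerivAt_id t).add_const ε).rpow_const (p := q) (Or.inl h.ne')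

theorem hasDerivAt_clampedPow (h : 0 < t + ε) :
    HasDerivAt (clampedPow q ε) (q * (t + ε) ^ (q - 1) - q * (1 + ε) ^ (q - 1)) t :=
  (((hasDerivAt_add_rpow h).sub_const ((1 + ε) ^ q)).fun_sub
    (((hasDerivAt_id t).sub_const 1).const_mul (q * (1 + ε) ^ (q - 1)))).congr_deriv
      (by rw [mul_one])

theorem lap_clampedPow_norm_sq {x : EuclideanSpace ℝ (Fin N)} (h : 0 < ‖x‖ ^ 2 + ε) :
    lap (fun y => clampedPow q ε (‖y‖ ^ 2)) x =
      lapPowCoeff N q * (‖x‖ ^ 2 + ε) ^ (q - 1) -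
        ε * (4 * q * (q - 1)) * (‖x‖ ^ 2 + ε) ^ (q - 2) - 2 * N * q * (1 + ε) ^ (q - 1) := by
  have hF : ∀ᶠ t in nhds (‖x‖ ^ 2), HasDerivAt (clampedPow q ε)
      (q * (t + ε) ^ (q - 1) - q * (1 + ε) ^ (q - 1)) t :=
    ((continuous_add_const ε).continuousAt.eventually (lt_mem_nhds h)).mono
      fun t ht => hasDerivAt_clampedPow ht
  have hF' : HasDerivAt (fun t => q * (t + ε) ^ (q - 1) - q * (1 + ε) ^ (q - 1))
      (q * ((q - 1) * (‖x‖ ^ 2 + ε) ^ (q - 1 - 1))) (‖x‖ ^ 2) :=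
    ((hasDerivAt_add_rpow h).const_mul q).sub_const _
  rw [lap_comp_norm_sq hF hF', show q - 1 - 1 = q - 2 by ring,
    show q - 1 = q - 2 + 1 by ring, Real.rpow_add_one h.ne', lapPowCoeff]
  ring

theorem biharm_clampedPow_norm_sq (hε : 0 < ε) (x : EuclideanSpace ℝ (Fin N)) :
    biharm (fun y => clampedPow q ε (‖y‖ ^ 2)) x = bilapClampedPow N q ε (‖x‖ ^ 2) := by
  have hpos (y : EuclideanSpace ℝ (Fin N)) : 0 < ‖y‖ ^ 2 + ε := by positivity
  have hF : ∀ᶠ t in nhds (‖x‖ ^ 2), HasDerivAt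
      (fun t => lapPowCoeff N q * (t + ε) ^ (q - 1) -
        ε * (4 * q * (q - 1)) * (t + ε) ^ (q - 2) - 2 * N * q * (1 + ε) ^ (q - 1))
      (lapPowCoeff N q * ((q - 1) * (t + ε) ^ (q - 1 - 1)) -
        ε * (4 * q * (q - 1)) * ((q - 2) * (t + ε) ^ (q - 2 - 1))) t :=
    ((continuous_add_const ε).continuousAt.eventually (lt_mem_nhds (hpos x))).mono fun t ht =>
      (((hasDerivAt_add_rpow ht).const_mul _).sub
        ((hasDerivAt_add_rpow ht).const_mul _)).sub_const _
  have hF' : HasDerivAt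
      (fun t => lapPowCoeff N q * ((q - 1) * (t + ε) ^ (q - 1 - 1)) -
        ε * (4 * q * (q - 1)) * ((q - 2) * (t + ε) ^ (q - 2 - 1)))
      (lapPowCoeff N q * ((q - 1) * ((q - 1 - 1) * (‖x‖ ^ 2 + ε) ^ (q - 1 - 1 - 1))) -
        ε * (4 * q * (q - 1)) *
          ((q - 2) * ((q - 2 - 1) * (‖x‖ ^ 2 + ε) ^ (q - 2 - 1 - 1)))) (‖x‖ ^ 2) :=
    (((hasDerivAt_add_rpow (hpos x)).const_mul _).const_mul _).sub
      (((hasDerivAt_add_rpow (hpos x)).const_mul _).const_mul _)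
  have hlap : lap (fun y : EuclideanSpace ℝ (Fin N) => clampedPow q ε (‖y‖ ^ 2)) = fun y => _ :=
    funext fun y => lap_clampedPow_norm_sq (hpos y)
  rw [biharm, hlap, lap_comp_norm_sq hF hF',
    bilapClampedPow, show q - 1 - 1 = q - 4 + 1 + 1 by ring, show q - 2 - 1 = q - 4 + 1 by ring,
    show q - 4 + 1 + 1 - 1 = q - 4 + 1 by ring, show q - 4 + 1 - 1 = q - 4 by ring,
    show q - 2 = q - 4 + 1 + 1 by ring, show q - 3 = q - 4 + 1 by ring]
  simp only [Real.rpow_add_one (hpos x).ne', lapPowCoeff]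
  ring

theorem isClamped_clampedPow (hε : 0 < ε) :
    IsClamped (closedBall 0 1) fun x : EuclideanSpace ℝ (Fin N) => clampedPow q ε (‖x‖ ^ 2) := by
  have hsmooth : ContDiff ℝ 4 fun x : EuclideanSpace ℝ (Fin N) => clampedPow q ε (‖x‖ ^ 2) := by
    have hpow : ContDiff ℝ 4 fun x : EuclideanSpace ℝ (Fin N) => (‖x‖ ^ 2 + ε) ^ q :=
      ((contDiff_norm_sq ℝ).add contDiff_const).rpow_const_of_ne fun x => by positivity
    exact (hpow.sub contDiff_const).sub
      (contDiff_const.mul ((contDiff_norm_sq ℝ).sub contDiff_const))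
  refine ⟨hsmooth.contDiffOn, ?_, ?_⟩ <;> rw [frontier_closedBall 0 one_ne_zero] <;> intro x hx <;>
    have hx1 : ‖x‖ = 1 := mem_sphere_zero_iff_norm.1 hx
  · simp [clampedPow, hx1]
  · have hderiv := hasFDerivAt_comp_norm_sq (x := x)
      (hasDerivAt_clampedPow (q := q) (ε := ε) (by positivity : 0 < ‖x‖ ^ 2 + ε))
    rw [hderiv.hasFDerivWithinAt.fderivWithin (uniqueDiffOn_convex (convex_closedBall _ _)
      (by simp [interior_closedBall]) x (sphere_subset_closedBall hx))]
    simp [hx1]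

theorem abs_clampedPow_le (hq : q ≤ 0) (hε : 0 ≤ ε) (ht : 0 < t) (ht1 : t ≤ 1) :
    |clampedPow q ε t| ≤ (2 - q) * t ^ (q - 2) := by
  have hpow : 1 ≤ t ^ (q - 2) := Real.one_le_rpow_of_pos_of_le_one_of_nonpos ht ht1 (by linarith)
  have h1 : (t + ε) ^ q ≤ t ^ (q - 2) :=
    (Real.rpow_le_rpow_of_nonpos ht (by linarith) hq).trans
      (Real.rpow_le_rpow_of_exponent_ge ht ht1 (by linarith))
  have h2 : (1 + ε) ^ q ≤ 1 := Real.rpow_le_one_of_one_le_of_nonpos (by linarith) hq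
  have h3 : (1 + ε) ^ (q - 1) ≤ 1 :=
    Real.rpow_le_one_of_one_le_of_nonpos (by linarith) (by linarith)
  have h1' : 0 ≤ (t + ε) ^ q := by positivity
  have h2' : 0 ≤ (1 + ε) ^ q := by positivity
  have h3' : 0 ≤ (1 + ε) ^ (q - 1) := by positivity
  have h4 : 0 ≤ -q * ((1 + ε) ^ (q - 1) * (1 - t)) :=
    mul_nonneg (by linarith) (mul_nonneg h3' (by linarith))
  have h5 : -q * ((1 + ε) ^ (q - 1) * (1 - t)) ≤ -q * t ^ (q - 2) :=
    mul_le_mul_of_nonneg_left (by nlinarith) (by linarith)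
  rw [clampedPow, abs_le]
  constructor <;> linarith

theorem mul_rpow_sub_one_le {τ a : ℝ} (hτ : 0 < τ) (hε : ε ≤ τ) :
    ε * τ ^ (a - 1) ≤ τ ^ a := by
  calc ε * τ ^ (a - 1) ≤ τ * τ ^ (a - 1) := by gcongr
    _ = τ ^ a := by rw [mul_comm, Real.rpow_sub_one hτ.ne', div_mul_cancel₀ _ hτ.ne']

theorem exists_abs_bilapClampedPow_le (N : ℕ) (hq : q ≤ 2) :
    ∃ C, ∀ ε t, 0 ≤ ε → 0 < t → |bilapClampedPow N q ε t| ≤ C * t ^ (q - 2) := by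
  let c₀ := lapPowCoeff N q * lapPowCoeff N (q - 1)
  let c₁ := 4 * (q - 1) * (q - 2) * lapPowCoeff N q + 4 * q * (q - 1) * lapPowCoeff N (q - 2)
  let c₂ := 16 * q * (q - 1) * (q - 2) * (q - 3)
  refine ⟨|c₀| + |c₁| + |c₂|, fun ε t hε ht => ?_⟩
  have hτ : 0 < t + ε := by positivity
  have hpow : (t + ε) ^ (q - 2) ≤ t ^ (q - 2) :=
    Real.rpow_le_rpow_of_nonpos ht (by linarith) (by linarith)
  have h3 : ε * (t + ε) ^ (q - 3) ≤ (t + ε) ^ (q - 2) := by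
    simpa [sub_sub, show (2 : ℝ) + 1 = 3 by norm_num] using
      mul_rpow_sub_one_le (a := q - 2) hτ (by linarith)
  have h4 : ε * (t + ε) ^ (q - 4) ≤ (t + ε) ^ (q - 3) := by
    simpa [sub_sub, show (3 : ℝ) + 1 = 4 by norm_num] using
      mul_rpow_sub_one_le (a := q - 3) hτ (by linarith)
  calc |bilapClampedPow N q ε t|
    _ = |c₀ * (t + ε) ^ (q - 2) - c₁ * (ε * (t + ε) ^ (q - 3)) +
          c₂ * (ε * (ε * (t + ε) ^ (q - 4)))| := by
      simp only [bilapClampedPow, c₀, c₁, c₂]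
      ring_nf
    _ ≤ |c₀| * (t + ε) ^ (q - 2) + |c₁| * (ε * (t + ε) ^ (q - 3)) +
          |c₂| * (ε * (ε * (t + ε) ^ (q - 4))) := by
      refine (abs_add_le _ _).trans (add_le_add ((abs_sub _ _).trans_eq ?_) (le_of_eq ?_)) <;>
        simp only [abs_mul, abs_of_nonneg hε, Real.abs_rpow_of_nonneg hτ.le, abs_of_pos hτ]
    _ ≤ |c₀| * t ^ (q - 2) + |c₁| * t ^ (q - 2) + |c₂| * t ^ (q - 2) := by
      gcongr
      · exact h3.trans hpow
      · exact (mul_le_mul_of_nonneg_left h4 hε).trans (h3.trans hpow)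
    _ = (|c₀| + |c₁| + |c₂|) * t ^ (q - 2) := by ring

theorem tendsto_add_rpow (ht : 0 < t) (a : ℝ) :
    Tendsto (fun ε => (t + ε) ^ a) (nhdsWithin 0 (Ioi 0)) (nhds ((t + 0) ^ a)) :=
  (((continuous_const_add t).tendsto 0).rpow_const
    (Or.inl (by simpa using ht.ne'))).mono_left nhdsWithin_le_nhds

theorem tendsto_clampedPow (ht : 0 < t) :
    Tendsto (fun ε => clampedPow q ε t) (nhdsWithin 0 (Ioi 0)) (nhds (clampedPow q 0 t)) :=
  ((tendsto_add_rpow ht q).sub (tendsto_add_rpow one_pos q)).sub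
    (((tendsto_add_rpow one_pos (q - 1)).const_mul q).mul_const (t - 1))

theorem tendsto_bilapClampedPow (ht : 0 < t) :
    Tendsto (fun ε => bilapClampedPow N q ε t) (nhdsWithin 0 (Ioi 0))
      (nhds (bilapClampedPow N q 0 t)) := by
  have hε : Tendsto (fun ε : ℝ => ε) (nhdsWithin 0 (Ioi 0)) (nhds 0) :=
    tendsto_id.mono_left nhdsWithin_le_nhds
  exact (((tendsto_add_rpow ht (q - 2)).const_mul _).sub
    ((hε.mul_const _).mul (tendsto_add_rpow ht (q - 3)))).add
    (((hε.pow 2).mul_const _).mul (tendsto_add_rpow ht (q - 4)))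

end ClampedPower

section NormPowers

variable {E : Type*} [NormedAddCommGroup E] [NormedSpace ℝ E] [FiniteDimensional ℝ E]
  [Nontrivial E] [MeasurableSpace E] [BorelSpace E] (μ : Measure E) [μ.IsAddHaarMeasure] {a : ℝ}

theorem integrableOn_ball_norm_sq_rpow (ha : 0 < Module.finrank ℝ E + 2 * a) :
    IntegrableOn (fun x : E => (‖x‖ ^ 2) ^ a) (ball 0 1) μ := by
  refine integrableOn_ball_of_norm_le_rpow (C := 1) (α := -(2 * a)) Module.finrank_pos
    (by linarith) (ae_of_all _ fun x => ?_)
    (by fun_prop : Measurable fun x : E => (‖x‖ ^ 2) ^ a).aestronglyMeasurable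
  rw [Real.norm_of_nonneg (by positivity), neg_neg, one_mul, Real.rpow_mul (norm_nonneg x),
    Real.rpow_two]

theorem integral_ball_norm_sq_rpow (ha : 0 < Module.finrank ℝ E + 2 * a) :
    ∫ x in ball (0 : E) 1, (‖x‖ ^ 2) ^ a ∂μ =
      μ.real (ball 0 1) * (Module.finrank ℝ E / (Module.finrank ℝ E + 2 * a)) := by
  set d := Module.finrank ℝ E
  have hd : 0 < d := Module.finrank_pos
  have hradial : ∀ r ∈ Ioc (0 : ℝ) 1, r ^ (d - 1) * (r ^ 2) ^ a = r ^ (d + 2 * a - 1) := by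
    intro r hr
    rw [← Real.rpow_natCast, ← Real.rpow_two, ← Real.rpow_mul hr.1.le, ← Real.rpow_add hr.1,
      Nat.cast_pred hd]
    ring_nf
  have hindicator : (fun x : E => (ball (0 : E) 1).indicator (fun x => (‖x‖ ^ 2) ^ a) x) =
      fun x => (Iio (1 : ℝ)).indicator (fun r => (r ^ 2) ^ a) ‖x‖ := by
    ext x
    simp [indicator]
  have hone : ∫ r in Ioi (0 : ℝ), r ^ (d - 1) • (Iio (1 : ℝ)).indicator (fun r => (r ^ 2) ^ a) r =
      1 / (d + 2 * a) := by
    simp only [smul_eq_mul, ← indicator_mul_right _ fun r : ℝ => r ^ (d - 1)]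
    rw [setIntegral_indicator measurableSet_Iio, Ioi_inter_Iio, ← integral_Ioc_eq_integral_Ioo,
      setIntegral_congr_fun measurableSet_Ioc hradial,
      ← intervalIntegral.integral_of_le zero_le_one, integral_rpow (Or.inl (by linarith))]
    simp [ha.ne']
  rw [← integral_indicator measurableSet_ball, hindicator, integral_fun_norm_addHaar, hone]
  simp
  ring

end NormPowers

theorem ae_restrict_ball_norm_sq_mem_Ioo {E : Type*} [NormedAddCommGroup E] [MeasurableSpace E]
    [BorelSpace E] (μ : Measure E) [NullSingletonClass μ] :
    ∀ᵐ x ∂μ.restrict (ball 0 1), ‖x‖ ^ 2 ∈ Ioo (0 : ℝ) 1 := by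
  rw [ae_restrict_iff' measurableSet_ball]
  filter_upwards [measure_eq_zero_iff_ae_notMem.1 (measure_singleton (μ := μ) 0)] with x hx0 hx
  exact ⟨by have := norm_pos_iff.2 hx0; positivity,
    pow_lt_one₀ (norm_nonneg x) (mem_ball_zero_iff.1 hx) two_ne_zero⟩

section WeakBilaplacian

variable {N : ℕ} {φ ψ φ' ψ' u : EuclideanSpace ℝ (Fin N) → ℝ} {q : ℝ}

/-- `ψ` is the bilaplacian of `φ` on the unit ball, and `φ` is clamped on the unit sphere, in the
sense of Green's identity tested against clamped functions. The integrand is only required to be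
integrable as a whole. -/
def HasWeakBilaplacian (φ ψ : EuclideanSpace ℝ (Fin N) → ℝ) : Prop :=
  ∀ u, IsClamped (closedBall 0 1) u →
    IntegrableOn (fun x => φ x * biharm u x - u x * ψ x) (ball 0 1) ∧
      ∫ x in ball 0 1, (φ x * biharm u x - u x * ψ x) = 0

theorem HasWeakBilaplacian.const_mul (h : HasWeakBilaplacian φ ψ) (c : ℝ) :
    HasWeakBilaplacian (fun x => c * φ x) fun x => c * ψ x := by
  intro u hu
  have hc : (fun x => c * φ x * biharm u x - u x * (c * ψ x)) =
      fun x => c * (φ x * biharm u x - u x * ψ x) := by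
    ext x
    ring
  rw [hc, integral_const_mul, (h u hu).2, mul_zero]
  exact ⟨(h u hu).1.const_mul c, rfl⟩

theorem HasWeakBilaplacian.sub (h : HasWeakBilaplacian φ ψ) (h' : HasWeakBilaplacian φ' ψ') :
    HasWeakBilaplacian (fun x => φ x - φ' x) fun x => ψ x - ψ' x := by
  intro u hu
  have hsub : (fun x => (φ x - φ' x) * biharm u x - u x * (ψ x - ψ' x)) =
      fun x => (φ x * biharm u x - u x * ψ x) - (φ' x * biharm u x - u x * ψ' x) := by
    ext x
    ring
  rw [hsub, integral_sub (h u hu).1 (h' u hu).1, (h u hu).2, (h' u hu).2, sub_zero]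
  exact ⟨(h u hu).1.sub (h' u hu).1, rfl⟩

theorem interior_closedBall_zero_one {E : Type*} [NormedAddCommGroup E] [NormedSpace ℝ E] :
    interior (closedBall (0 : E) 1) = ball 0 1 :=
  interior_closedBall 0 one_ne_zero

theorem uniqueDiffOn_closedBall_zero_one {E : Type*} [NormedAddCommGroup E] [NormedSpace ℝ E] :
    UniqueDiffOn ℝ (closedBall (0 : E) 1) :=
  uniqueDiffOn_convex (convex_closedBall 0 1)
    (by rw [interior_closedBall_zero_one]; exact nonempty_ball.2 one_pos)

theorem integral_clampedPow_mul_biharm_sub_eq_zero {ε : ℝ} (hε : 0 < ε)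
    (hu : IsClamped (closedBall 0 1) u) :
    ∫ x in ball 0 1,
      (clampedPow q ε (‖x‖ ^ 2) * biharm u x - u x * bilapClampedPow N q ε (‖x‖ ^ 2)) = 0 := by
  simpa only [interior_closedBall_zero_one, biharm_clampedPow_norm_sq hε] using
    (isClamped_clampedPow (q := q) hε).integral_mul_biharm_sub_eq_zero (isCompact_closedBall 0 1)
      (convex_closedBall 0 1) (by simp [interior_closedBall_zero_one]) hu

theorem exists_norm_clampedPow_mul_biharm_sub_le (hu : ContDiffOn ℝ 4 u (closedBall 0 1))
    (hq : q ≤ 0) :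
    ∃ C, ∀ ε, 0 ≤ ε → ∀ x ∈ ball 0 1, 0 < ‖x‖ ^ 2 →
      ‖clampedPow q ε (‖x‖ ^ 2) * biharm u x - u x * bilapClampedPow N q ε (‖x‖ ^ 2)‖ ≤
        C * (‖x‖ ^ 2) ^ (q - 2) := by
  obtain ⟨A, hA⟩ := (isCompact_closedBall 0 1).exists_bound_of_continuousOn
    hu.continuousOn
  obtain ⟨B, hB⟩ := exists_norm_biharm_le (isCompact_closedBall 0 1)
    uniqueDiffOn_closedBall_zero_one hu
  obtain ⟨D, hD⟩ := exists_abs_bilapClampedPow_le N (hq.trans zero_le_two)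
  rw [interior_closedBall_zero_one] at hB
  refine ⟨(2 - q) * B + A * D, fun ε hε x hx hx0 => ?_⟩
  have hx1 : ‖x‖ ^ 2 ≤ 1 := pow_le_one₀ (norm_nonneg x) (mem_ball_zero_iff.1 hx).le
  calc ‖clampedPow q ε (‖x‖ ^ 2) * biharm u x - u x * bilapClampedPow N q ε (‖x‖ ^ 2)‖
    _ ≤ ‖clampedPow q ε (‖x‖ ^ 2)‖ * ‖biharm u x‖ +
        ‖u x‖ * ‖bilapClampedPow N q ε (‖x‖ ^ 2)‖ := by
      simpa only [norm_mul] using norm_sub_le (clampedPow q ε (‖x‖ ^ 2) * biharm u x)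
        (u x * bilapClampedPow N q ε (‖x‖ ^ 2))
    _ ≤ ((2 - q) * (‖x‖ ^ 2) ^ (q - 2)) * B + A * (D * (‖x‖ ^ 2) ^ (q - 2)) := by
      have hA0 : 0 ≤ A := (norm_nonneg _).trans (hA x (ball_subset_closedBall hx))
      gcongr
      · exact mul_nonneg (by linarith) (by positivity)
      · exact abs_clampedPow_le hq hε hx0 hx1
      · exact hB x hx
      · exact hA x (ball_subset_closedBall hx)
      · exact hD ε _ hε hx0
    _ = ((2 - q) * B + A * D) * (‖x‖ ^ 2) ^ (q - 2) := by ring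

theorem aestronglyMeasurable_clampedPow_mul_biharm_sub
    (hu : ContDiffOn ℝ 4 u (closedBall 0 1)) (q ε : ℝ) : AEStronglyMeasurable
      (fun x => clampedPow q ε (‖x‖ ^ 2) * biharm u x - u x * bilapClampedPow N q ε (‖x‖ ^ 2))
      (volume.restrict (ball 0 1)) := by
  have hbiharm := continuousOn_biharm_interior uniqueDiffOn_closedBall_zero_one hu
  rw [interior_closedBall_zero_one] at hbiharm
  have hclamped : Measurable (clampedPow q ε) := by unfold clampedPow; fun_prop
  have hbilap : Measurable (bilapClampedPow N q ε) := by unfold bilapClampedPow; fun_prop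
  exact ((hclamped.comp (by fun_prop)).aestronglyMeasurable.mul
    (hbiharm.aestronglyMeasurable measurableSet_ball)).sub
    (((hu.continuousOn.mono ball_subset_closedBall).aestronglyMeasurable
      measurableSet_ball).mul (hbilap.comp (by fun_prop)).aestronglyMeasurable)

theorem hasWeakBilaplacian_clampedPow (hq : q ≤ 0) (hN : 4 < N + 2 * q) :
    HasWeakBilaplacian (fun x : EuclideanSpace ℝ (Fin N) => clampedPow q 0 (‖x‖ ^ 2))
      fun x => bilapClampedPow N q 0 (‖x‖ ^ 2) := by
  intro u hu
  have : NeZero N := ⟨by rintro rfl; norm_num at hN; linarith⟩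
  have hmeas := aestronglyMeasurable_clampedPow_mul_biharm_sub hu.contDiffOn q
  obtain ⟨C, hC⟩ := exists_norm_clampedPow_mul_biharm_sub_le hu.contDiffOn hq
  have hbound : IntegrableOn
      (fun x : EuclideanSpace ℝ (Fin N) => C * (‖x‖ ^ 2) ^ (q - 2)) (ball 0 1) :=
    (integrableOn_ball_norm_sq_rpow volume
      (by rw [finrank_euclideanSpace_fin]; linarith)).const_mul C
  have hae (ε : ℝ) (hε : 0 ≤ ε) : ∀ᵐ x ∂volume.restrict (ball 0 1),
      ‖clampedPow q ε (‖x‖ ^ 2) * biharm u x - u x * bilapClampedPow N q ε (‖x‖ ^ 2)‖ ≤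
        C * (‖x‖ ^ 2) ^ (q - 2) := by
    filter_upwards [ae_restrict_ball_norm_sq_mem_Ioo volume, ae_restrict_mem measurableSet_ball]
      with x hx0 hx using hC ε hε x hx hx0.1
  refine ⟨hbound.mono' (hmeas 0) (hae 0 le_rfl), ?_⟩
  have hpos : ∀ᶠ ε : ℝ in nhdsWithin 0 (Ioi 0), 0 < ε := eventually_mem_nhdsWithin
  have hlim := tendsto_integral_filter_of_dominated_convergence (l := nhdsWithin 0 (Ioi 0)) _
    (Eventually.of_forall hmeas)
    (hpos.mono fun ε hε => hae ε hε.le) hbound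
    ((ae_restrict_ball_norm_sq_mem_Ioo volume).mono fun x hx =>
      ((tendsto_clampedPow hx.1).mul_const (biharm u x)).sub
        ((tendsto_bilapClampedPow hx.1).const_mul (u x)))
  have hzero := hlim.congr' (hpos.mono fun ε hε =>
    integral_clampedPow_mul_biharm_sub_eq_zero hε hu)
  exact tendsto_nhds_unique hzero tendsto_const_nhds

end WeakBilaplacian

section DualCertificate

variable {N : ℕ} {φ ψ s : EuclideanSpace ℝ (Fin N) → ℝ} {L lam : ℝ}

-- The tangent line at `v = 1 - 1 / s` of the convex function `v ↦ (1 - v)⁻²`.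
theorem tangent_le_one_div_one_sub_sq {s v : ℝ} (hs : 0 ≤ s) (hv : v < 1) :
    3 * s ^ 2 - 2 * s ^ 3 + 2 * s ^ 3 * v ≤ 1 / (1 - v) ^ 2 := by
  have hv' : 0 < 1 - v := by linarith
  rw [le_div_iff₀ (by positivity)]
  have hfactor : 1 - (3 * s ^ 2 - 2 * s ^ 3 + 2 * s ^ 3 * v) * (1 - v) ^ 2 =
      (s * (1 - v) - 1) ^ 2 * (2 * (s * (1 - v)) + 1) := by ring
  have : 0 ≤ (s * (1 - v) - 1) ^ 2 * (2 * (s * (1 - v)) + 1) := by positivity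
  linarith

theorem le_of_mem_solSet_of_hasWeakBilaplacian (hw : HasWeakBilaplacian φ ψ)
    (hφ : ∀ᵐ x ∂volume.restrict (ball 0 1), 0 ≤ φ x)
    (hs : ∀ᵐ x ∂volume.restrict (ball 0 1), 0 ≤ s x)
    (hψ : ∀ᵐ x ∂volume.restrict (ball 0 1), ψ x ≤ 2 * L * s x ^ 3 * φ x)
    (hpos : 0 < ∫ x in ball 0 1, φ x * (3 * s x ^ 2 - 2 * s x ^ 3)) (hlam : lam ∈ solSet N) :
    lam ≤ L := by
  obtain ⟨hlam0, u, hu⟩ := hlam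
  obtain ⟨hint, hzero⟩ := hw u hu.isClamped
  by_contra! hlt
  have hle : ∫ x in ball 0 1, lam * (φ x * (3 * s x ^ 2 - 2 * s x ^ 3)) ≤
      ∫ x in ball 0 1, (φ x * biharm u x - u x * ψ x) := by
    refine integral_mono_ae ((Integrable.of_integral_ne_zero hpos.ne').const_mul lam) hint ?_
    filter_upwards [hφ, hs, hψ, ae_restrict_mem measurableSet_ball] with x hφx hsx hψx hx
    have htangent := mul_le_mul_of_nonneg_left
      (tangent_le_one_div_one_sub_sq hsx (hu.lt_one x hx)) (mul_nonneg hlam0.le hφx)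
    have hψ_lam : ψ x ≤ 2 * lam * s x ^ 3 * φ x := hψx.trans (by gcongr)
    have hupper := mul_le_mul_of_nonneg_left hψ_lam (hu.pos x hx).le
    rw [hu.eqn x hx, div_eq_mul_one_div]
    linarith
  rw [hzero, integral_const_mul] at hle
  exact hle.not_gt (mul_pos hlam0 hpos)

end DualCertificate

section TestFunction

variable {N : ℕ} {t a : ℝ}

/-- The radial test function of the dual certificate, in the variable `t = ‖x‖ ^ 2`. For both
exponents `q = 3 - N / 2` and `q = -1`, the bilaplacian of `(‖x‖ ^ 2) ^ q` is
`8 (N - 6) (N - 4) (‖x‖ ^ 2) ^ (q - 2)`; the coefficients cancel the constant terms. -/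
noncomputable def testFun (N : ℕ) (t : ℝ) : ℝ :=
  4 * clampedPow (3 - N / 2) 0 t - (N - 4) * clampedPow (-1) 0 t

/-- The bilaplacian of `testFun N (‖x‖ ^ 2)` away from the origin. -/
noncomputable def bilapTestFun (N : ℕ) (t : ℝ) : ℝ :=
  4 * bilapClampedPow N (3 - N / 2) 0 t - (N - 4) * bilapClampedPow N (-1) 0 t

/-- The function `s` of the dual certificate, whose tangents are taken at `1 - 1 / s (‖x‖ ^ 2)`.
Its exponent makes `s ^ 3` scale like the factor `t ^ (-2)` of the bilaplacian of `testFun`; the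
factor `8 / 11` balances the differential inequality against the positivity of the certificate. -/
noncomputable def tangencyFun (t : ℝ) : ℝ := 8 / 11 * t ^ (-(2 / 3) : ℝ)

theorem testFun_eq (N : ℕ) (t : ℝ) :
    testFun N t = 4 * t ^ (3 - N / 2 : ℝ) - (N - 4) * t ^ (-1 : ℝ) + (N - 8) * t := by
  simp only [testFun, clampedPow, add_zero, Real.one_rpow]
  ring

theorem bilapTestFun_eq (N : ℕ) (ht : 0 < t) :
    bilapTestFun N t =
      8 * (N - 6) * (N - 4) * t ^ (-2 : ℝ) * (testFun N t - (N - 8) * t) := by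
  rw [bilapTestFun, bilapClampedPow, bilapClampedPow, testFun_eq, sub_eq_add_neg _ (2 : ℝ),
    Real.rpow_add (by simpa), sub_eq_add_neg (-1) (2 : ℝ), Real.rpow_add (by simpa)]
  simp only [lapPowCoeff, add_zero]
  ring

theorem testFun_nonneg (hN : 8 ≤ N) (ht : 0 < t) : 0 ≤ testFun N t := by
  have hN' : (8 : ℝ) ≤ N := by exact_mod_cast hN
  have hpow_pos : 0 < t ^ (-2 : ℝ) := Real.rpow_pos_of_pos ht _
  have hbernoulli : 1 + ((N : ℝ) - 4) / 4 * (t ^ (-2 : ℝ) - 1) ≤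
      (t ^ (-2 : ℝ)) ^ (((N : ℝ) - 4) / 4) := by
    simpa using one_add_mul_self_le_rpow_one_add (s := t ^ (-2 : ℝ) - 1) (by linarith)
      (p := ((N : ℝ) - 4) / 4) (by linarith)
  have hfactor : testFun N t = t * (4 * (t ^ (-2 : ℝ)) ^ (((N : ℝ) - 4) / 4) -
      ((N - 4) * t ^ (-2 : ℝ) - (N - 8))) := by
    rw [testFun_eq, ← Real.rpow_mul ht.le, show (3 - N / 2 : ℝ) = -2 * ((N - 4) / 4) + 1 by ring,
      show (-1 : ℝ) = -2 + 1 by norm_num, Real.rpow_add_one ht.ne', Real.rpow_add_one ht.ne']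
    ring
  rw [hfactor]
  exact mul_nonneg ht.le (by linarith)

theorem hasWeakBilaplacian_testFun (hN : 7 ≤ N) :
    HasWeakBilaplacian (fun x : EuclideanSpace ℝ (Fin N) => testFun N (‖x‖ ^ 2))
      fun x => bilapTestFun N (‖x‖ ^ 2) := by
  have hN' : (7 : ℝ) ≤ N := by exact_mod_cast hN
  exact ((hasWeakBilaplacian_clampedPow (by linarith) (by linarith)).const_mul 4).sub
    ((hasWeakBilaplacian_clampedPow (by norm_num) (by linarith)).const_mul (N - 4))

theorem tangencyFun_sq (ht : 0 < t) : tangencyFun t ^ 2 = 64 / 121 * t ^ (-(4 / 3) : ℝ) := by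
  rw [tangencyFun, mul_pow, ← Real.rpow_mul_natCast ht.le]
  norm_num

theorem tangencyFun_pow_three (ht : 0 < t) : tangencyFun t ^ 3 = 512 / 1331 * t ^ (-2 : ℝ) := by
  rw [tangencyFun, mul_pow, ← Real.rpow_mul_natCast ht.le]
  norm_num

theorem bilaplacian_coeff_le (hN : 17 ≤ N) :
    8 * ((N : ℝ) - 6) * (N - 4) ≤ 2 * ((N : ℝ) ^ 2 * (N - 4) ^ 2 / 32) * (512 / 1331) := by
  obtain ⟨n, rfl⟩ := Nat.exists_eq_add_of_le hN
  push_cast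
  rw [← sub_nonneg]
  ring_nf
  positivity

theorem bilapTestFun_le (hN : 17 ≤ N) (ht : 0 < t) :
    bilapTestFun N t ≤
      2 * ((N : ℝ) ^ 2 * (N - 4) ^ 2 / 32) * tangencyFun t ^ 3 * testFun N t := by
  have hN' : (17 : ℝ) ≤ N := by exact_mod_cast hN
  have hpow_pos : 0 < t ^ (-2 : ℝ) := Real.rpow_pos_of_pos ht _
  have htestFun : 0 ≤ testFun N t := testFun_nonneg (by omega) ht
  rw [bilapTestFun_eq _ ht, tangencyFun_pow_three ht]
  calc 8 * (N - 6) * (N - 4) * t ^ (-2 : ℝ) * (testFun N t - (N - 8) * t)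
    _ ≤ 8 * (N - 6) * (N - 4) * t ^ (-2 : ℝ) * testFun N t := by
      gcongr
      · exact mul_nonneg (mul_nonneg (by linarith) (by linarith)) hpow_pos.le
      · exact sub_le_self _ (mul_nonneg (by linarith) ht.le)
    _ ≤ 2 * ((N : ℝ) ^ 2 * (N - 4) ^ 2 / 32) * (512 / 1331) * t ^ (-2 : ℝ) * testFun N t := by
      gcongr ?_ * _ * _
      exact bilaplacian_coeff_le hN
    _ = 2 * ((N : ℝ) ^ 2 * (N - 4) ^ 2 / 32) * (512 / 1331 * t ^ (-2 : ℝ)) * testFun N t := by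
      ring

theorem testFun_mul_rpow (N : ℕ) (ht : 0 < t) (a : ℝ) :
    testFun N t * t ^ a =
      4 * t ^ (3 - N / 2 + a : ℝ) - (N - 4) * t ^ (-1 + a) + (N - 8) * t ^ (1 + a) := by
  rw [testFun_eq, Real.rpow_add ht, Real.rpow_add ht, Real.rpow_add ht, Real.rpow_one]
  ring

theorem testFun_norm_sq_mul_rpow_ae_eq (a : ℝ) [NeZero N] :
    (fun x : EuclideanSpace ℝ (Fin N) => testFun N (‖x‖ ^ 2) * (‖x‖ ^ 2) ^ a)
      =ᵐ[volume.restrict (ball 0 1)] fun x =>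
        4 * (‖x‖ ^ 2) ^ (3 - N / 2 + a : ℝ) - (N - 4) * (‖x‖ ^ 2) ^ (-1 + a) +
          (N - 8) * (‖x‖ ^ 2) ^ (1 + a) :=
  (ae_restrict_ball_norm_sq_mem_Ioo volume).mono fun _ hx => testFun_mul_rpow N hx.1 a

theorem integrableOn_testFun_mul_rpow (hN : 8 ≤ N) (ha : 0 < 6 + 2 * a) :
    IntegrableOn (fun x : EuclideanSpace ℝ (Fin N) => testFun N (‖x‖ ^ 2) * (‖x‖ ^ 2) ^ a)
      (ball 0 1) := by
  have hN' : (8 : ℝ) ≤ N := by exact_mod_cast hN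
  have : NeZero N := ⟨by omega⟩
  have hint (b : ℝ) (hb : 0 < N + 2 * b) : IntegrableOn
      (fun x : EuclideanSpace ℝ (Fin N) => (‖x‖ ^ 2) ^ b) (ball 0 1) :=
    integrableOn_ball_norm_sq_rpow volume (by rwa [finrank_euclideanSpace_fin])
  exact ((((hint _ (by linarith)).const_mul 4).sub
    ((hint _ (by linarith)).const_mul (N - 4))).add
    ((hint _ (by linarith)).const_mul (N - 8))).congr (testFun_norm_sq_mul_rpow_ae_eq a).symm

theorem integral_testFun_mul_rpow (hN : 8 ≤ N) (ha : 0 < 6 + 2 * a) :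
    ∫ x in ball (0 : EuclideanSpace ℝ (Fin N)) 1, testFun N (‖x‖ ^ 2) * (‖x‖ ^ 2) ^ a =
      volume.real (ball (0 : EuclideanSpace ℝ (Fin N)) 1) * N *
        (4 / (6 + 2 * a) - (N - 4) / (N - 2 + 2 * a) + (N - 8) / (N + 2 + 2 * a)) := by
  have hN' : (8 : ℝ) ≤ N := by exact_mod_cast hN
  have : NeZero N := ⟨by omega⟩
  have hint (b : ℝ) (hb : 0 < N + 2 * b) : IntegrableOn
      (fun x : EuclideanSpace ℝ (Fin N) => (‖x‖ ^ 2) ^ b) (ball 0 1) :=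
    integrableOn_ball_norm_sq_rpow volume (by rwa [finrank_euclideanSpace_fin])
  have hmoment (b : ℝ) (hb : 0 < N + 2 * b) :
      ∫ x in ball (0 : EuclideanSpace ℝ (Fin N)) 1, (‖x‖ ^ 2) ^ b =
        volume.real (ball (0 : EuclideanSpace ℝ (Fin N)) 1) * (N / (N + 2 * b)) := by
    rw [integral_ball_norm_sq_rpow volume (by rwa [finrank_euclideanSpace_fin]),
      finrank_euclideanSpace_fin]
  have h₁ : 0 < N + 2 * (3 - N / 2 + a) := by linarith
  have h₂ : 0 < N + 2 * (-1 + a) := by linarith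
  have h₃ : 0 < N + 2 * (1 + a) := by linarith
  have hsub : IntegrableOn (fun x : EuclideanSpace ℝ (Fin N) =>
      4 * (‖x‖ ^ 2) ^ (3 - N / 2 + a : ℝ) - (N - 4) * (‖x‖ ^ 2) ^ (-1 + a)) (ball 0 1) :=
    ((hint _ h₁).const_mul 4).sub ((hint _ h₂).const_mul _)
  rw [integral_congr_ae (testFun_norm_sq_mul_rpow_ae_eq a),
    integral_add hsub ((hint _ h₃).const_mul _),
    integral_sub ((hint _ h₁).const_mul 4) ((hint _ h₂).const_mul _), integral_const_mul,
    integral_const_mul, integral_const_mul, hmoment _ h₁, hmoment _ h₂, hmoment _ h₃,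
    show N + 2 * (3 - N / 2 + a) = 6 + 2 * a by ring,
    show N + 2 * (-1 + a) = N - 2 + 2 * a by ring, show N + 2 * (1 + a) = N + 2 + 2 * a by ring]
  ring

theorem moment_combination_pos (hN : 17 ≤ N) :
    0 < 3 * (64 / 121) * (4 / (6 + 2 * (-(4 / 3))) - (N - 4) / (N - 2 + 2 * (-(4 / 3))) +
        (N - 8) / (N + 2 + 2 * (-(4 / 3)))) -
      2 * (512 / 1331) * (4 / (6 + 2 * (-2)) - (N - 4) / (N - 2 + 2 * (-2)) +
        (N - 8) / (N + 2 + 2 * (-2)) : ℝ) := by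
  obtain ⟨n, rfl⟩ := Nat.exists_eq_add_of_le hN
  push_cast
  rw [show (17 + n - 2 + 2 * (-(4 / 3)) : ℝ) = (37 + 3 * n) / 3 by ring,
    show (17 + n + 2 + 2 * (-(4 / 3)) : ℝ) = (49 + 3 * n) / 3 by ring,
    show (17 + n - 2 + 2 * (-2) : ℝ) = 11 + n by ring,
    show (17 + n + 2 + 2 * (-2) : ℝ) = 15 + n by ring]
  field_simp
  ring_nf
  positivity

theorem integral_testFun_mul_tangencyFun_pos (hN : 17 ≤ N) :
    0 < ∫ x in ball (0 : EuclideanSpace ℝ (Fin N)) 1,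
      testFun N (‖x‖ ^ 2) * (3 * tangencyFun (‖x‖ ^ 2) ^ 2 - 2 * tangencyFun (‖x‖ ^ 2) ^ 3) := by
  have : NeZero N := ⟨by omega⟩
  have hae : (fun x : EuclideanSpace ℝ (Fin N) => testFun N (‖x‖ ^ 2) *
        (3 * tangencyFun (‖x‖ ^ 2) ^ 2 - 2 * tangencyFun (‖x‖ ^ 2) ^ 3))
      =ᵐ[volume.restrict (ball 0 1)] fun x =>
        3 * (64 / 121) * (testFun N (‖x‖ ^ 2) * (‖x‖ ^ 2) ^ (-(4 / 3) : ℝ)) -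
          2 * (512 / 1331) * (testFun N (‖x‖ ^ 2) * (‖x‖ ^ 2) ^ (-2 : ℝ)) := by
    filter_upwards [ae_restrict_ball_norm_sq_mem_Ioo volume] with x hx
    rw [tangencyFun_sq hx.1, tangencyFun_pow_three hx.1]
    ring
  have hvol : 0 < volume.real (ball (0 : EuclideanSpace ℝ (Fin N)) 1) * N :=
    mul_pos (ENNReal.toReal_pos (measure_ball_pos _ _ one_pos).ne' measure_ball_lt_top.ne)
      (by exact_mod_cast NeZero.pos N)
  rw [integral_congr_ae hae, integral_sub
      ((integrableOn_testFun_mul_rpow (by omega) (by norm_num)).const_mul _)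
      ((integrableOn_testFun_mul_rpow (by omega) (by norm_num)).const_mul _),
    integral_const_mul, integral_const_mul, integral_testFun_mul_rpow (by omega) (by norm_num),
    integral_testFun_mul_rpow (by omega) (by norm_num)]
  linarith [mul_pos hvol (moment_combination_pos hN)]

end TestFunction

theorem pullIn_le_of_dim_17_to_30_general (N : ℕ) (hN : 17 ≤ N) :
    ∀ lam ∈ solSet N, lam ≤ (N : ℝ) ^ 2 * ((N : ℝ) - 4) ^ 2 / 32 := by
  intro lam hlam
  have : NeZero N := ⟨by omega⟩
  have hball := ae_restrict_ball_norm_sq_mem_Ioo (volume : Measure (EuclideanSpace ℝ (Fin N)))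
  refine le_of_mem_solSet_of_hasWeakBilaplacian (s := fun x => tangencyFun (‖x‖ ^ 2))
    (hasWeakBilaplacian_testFun (by omega)) ?nonneg ?tangency_nonneg ?supersolution
    (integral_testFun_mul_tangencyFun_pos hN) hlam
  case nonneg => exact hball.mono fun x hx => testFun_nonneg (by omega) hx.1
  case tangency_nonneg => exact ae_of_all _ fun x => by unfold tangencyFun; positivity
  case supersolution => exact hball.mono fun x hx => bilapTestFun_le hN hx.1

/-- for 17 ≤ N ≤ 30, the pull-in voltage satisfies λ* ≤ H_N/2 = N²(N-4)²/32. -/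
theorem pullIn_le_of_dim_17_to_30 (N : ℕ) (hN₁ : 17 ≤ N) (hN₂ : N ≤ 30) :
    ∀ lam ∈ solSet N, lam ≤ (N : ℝ) ^ 2 * ((N : ℝ) - 4) ^ 2 / 32 :=
  pullIn_le_of_dim_17_to_30_general N hN₁
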